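/- Let h ∈ K̄[z] be nonzero with a part-square decomposition h = q² + ρ, and let α, α′ ∈ K̄ and β, β′ ∈ K̄× satisfy v(β) = v(β′) and v(α − α′) ≥ v(β). Then the induced part-square decomposition h(βz + α) = (q(βz + α))² + ρ(βz + α) is good if and only if the induced part-square decomposition h(β′z + α′) = (q(β′z + α′))² + ρ(β′z + α′) is good. (Hence whether the induced decomposition is good depends only on the disc D_{α,v(β)} = {x ∈ K̄ : v(x − α) ≥ v(β)}.) -/

import Mathlib

open Polynomial

/-- The *Gauss valuation* of a polynomial: the minimum of the valuations of its
coefficients (with value `⊤ = +∞` for the zero polynomial). -/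
noncomputable def gaussVal {Kbar : Type*} [Field Kbar]
    (v : AddValuation Kbar (WithTop ℚ)) (h : Kbar[X]) : WithTop ℚ :=
  h.support.inf fun i => v (h.coeff i)

/-- `h = q² + ρ` is a *part-square decomposition* of `h`:
`deg q ≤ ⌈deg h / 2⌉`, encoded as `2 * deg q ≤ deg h + 1` (`q = 0` is allowed). -/
def IsPSD {Kbar : Type*} [Field Kbar] (h q ρ : Kbar[X]) : Prop :=
  h = q ^ 2 + ρ ∧ 2 * q.natDegree ≤ h.natDegree + 1

/-- A part-square decomposition `h = q² + ρ` is *good* if either `v ρ − v h ≥ 2 v 2`,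
or `v ρ − v h < 2 v 2` and no part-square decomposition of `h` has strictly larger
Gauss valuation of its remainder. -/
def IsGoodPSD {Kbar : Type*} [Field Kbar] (v : AddValuation Kbar (WithTop ℚ))
    (h q ρ : Kbar[X]) : Prop :=
  IsPSD h q ρ ∧
    (gaussVal v h + (v 2 + v 2) ≤ gaussVal v ρ ∨
      (gaussVal v ρ < gaussVal v h + (v 2 + v 2) ∧
        ∀ q' ρ' : Kbar[X], IsPSD h q' ρ' → gaussVal v ρ' ≤ gaussVal v ρ))

/-!
A point of the disc `D_{α, v β}` has the form `β * x + α` with `x` integral, so replacing `(α, β)`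
by another centre and a scale of the same valuation amounts to substituting `a * X + b`, with
`v a = 0` and `0 ≤ v b`, into the polynomials in the coordinate `x`. Substituting an integral
polynomial cannot lower the Gauss valuation; since the inverse of `a * X + b` is also integral, this
substitution is a ring automorphism that preserves both the degree and the Gauss valuation, and
goodness is defined by the ring operations and these two invariants.
-/

lemma C_mul_X_add_C_comp_C_mul_X_add_C {R : Type*} [CommSemiring R] (a b c d : R) :
    (C a * X + C b).comp (C c * X + C d) = C (a * c) * X + C (a * d + b) := by
  simp only [add_comp, mul_comp, C_comp, X_comp, C_add, C_mul]
  ring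

section GaussVal

variable {K : Type*} [Field K] {v : AddValuation K (WithTop ℚ)}

lemma le_gaussVal_iff {p : K[X]} {m : WithTop ℚ} :
    m ≤ gaussVal v p ↔ ∀ i, m ≤ v (p.coeff i) := by
  rw [gaussVal, Finset.le_inf_iff]
  refine ⟨fun hm i => ?_, fun hm i _ => hm i⟩
  by_cases hi : i ∈ p.support
  · exact hm i hi
  · simp only [notMem_support_iff.mp hi, AddValuation.map_zero, le_top]

lemma gaussVal_le_coeff (v : AddValuation K (WithTop ℚ)) (p : K[X]) (i : ℕ) :
    gaussVal v p ≤ v (p.coeff i) :=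
  le_gaussVal_iff.mp le_rfl i

lemma gaussVal_C_mul_X_add_C (a b : K) : gaussVal v (C a * X + C b) = min (v a) (v b) := by
  apply le_antisymm
  · exact le_min ((gaussVal_le_coeff v _ 1).trans_eq (by simp [coeff_C]))
      ((gaussVal_le_coeff v _ 0).trans_eq (by simp))
  · refine le_gaussVal_iff.mpr fun i => ?_
    rcases i with _ | _ | i <;> simp [coeff_C, coeff_X]

@[simp]
lemma gaussVal_C (a : K) : gaussVal v (C a) = v a := by
  simpa using gaussVal_C_mul_X_add_C (v := v) 0 a

lemma le_gaussVal_sum {ι : Type*} {s : Finset ι} {f : ι → K[X]} {m : WithTop ℚ}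
    (hf : ∀ i ∈ s, m ≤ gaussVal v (f i)) : m ≤ gaussVal v (∑ i ∈ s, f i) := by
  refine le_gaussVal_iff.mpr fun n => ?_
  rw [finsetSum_coeff]
  exact v.map_le_sum fun i hi => le_gaussVal_iff.mp (hf i hi) n

lemma gaussVal_add_le_gaussVal_mul (p r : K[X]) :
    gaussVal v p + gaussVal v r ≤ gaussVal v (p * r) := by
  refine le_gaussVal_iff.mpr fun n => ?_
  rw [coeff_mul]
  refine v.map_le_sum fun ij _ => ?_
  rw [v.map_mul]
  exact add_le_add (gaussVal_le_coeff v p ij.1) (gaussVal_le_coeff v r ij.2)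

lemma nsmul_gaussVal_le_gaussVal_pow (p : K[X]) (n : ℕ) :
    n • gaussVal v p ≤ gaussVal v (p ^ n) := by
  induction n with
  | zero => rw [zero_nsmul, pow_zero, ← C_1, gaussVal_C, v.map_one]
  | succ n ih =>
    rw [succ_nsmul, pow_succ]
    exact (add_le_add_left ih _).trans (gaussVal_add_le_gaussVal_mul _ _)

lemma gaussVal_le_gaussVal_comp (p : K[X]) {l : K[X]} (hl : 0 ≤ gaussVal v l) :
    gaussVal v p ≤ gaussVal v (p.comp l) := by
  rw [comp, eval₂_eq_sum, Polynomial.sum]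
  refine le_gaussVal_sum fun n _ => ?_
  calc gaussVal v p
      ≤ v (p.coeff n) := gaussVal_le_coeff v p n
    _ ≤ v (p.coeff n) + n • gaussVal v l := le_add_of_nonneg_right (nsmul_nonneg hl n)
    _ ≤ gaussVal v (C (p.coeff n)) + gaussVal v (l ^ n) := by
        rw [gaussVal_C]
        exact add_le_add_right (nsmul_gaussVal_le_gaussVal_pow l n) _
    _ ≤ gaussVal v (C (p.coeff n) * l ^ n) := gaussVal_add_le_gaussVal_mul _ _

lemma gaussVal_comp_eq_of_comp_eq_X (p : K[X]) {l m : K[X]} (hlm : l.comp m = X)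
    (hl : 0 ≤ gaussVal v l) (hm : 0 ≤ gaussVal v m) :
    gaussVal v (p.comp l) = gaussVal v p := by
  refine le_antisymm ?_ (gaussVal_le_gaussVal_comp p hl)
  calc gaussVal v (p.comp l)
      ≤ gaussVal v ((p.comp l).comp m) := gaussVal_le_gaussVal_comp _ hm
    _ = gaussVal v p := by rw [comp_assoc, hlm, comp_X]

lemma gaussVal_comp_C_mul_X_add_C (p : K[X]) {a b : K} (ha : v a = 0) (hb : 0 ≤ v b) :
    gaussVal v (p.comp (C a * X + C b)) = gaussVal v p := by
  have ha0 : a ≠ 0 := v.ne_top_iff.mp (by simp [ha])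
  have ha' : v a⁻¹ = 0 := by rw [v.map_inv, ha, neg_zero]
  refine gaussVal_comp_eq_of_comp_eq_X (m := C a⁻¹ * X + C (-(a⁻¹ * b))) p ?_ ?_ ?_
  · rw [C_mul_X_add_C_comp_C_mul_X_add_C, mul_neg, mul_inv_cancel₀ ha0,
      mul_inv_cancel_left₀ ha0, neg_add_cancel, C_1, one_mul, C_0, add_zero]
  · simp [gaussVal_C_mul_X_add_C, ha, hb]
  · simp only [gaussVal_C_mul_X_add_C, v.map_neg, v.map_mul, ha', zero_add, le_min_iff, le_rfl, hb,
      and_self]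

end GaussVal

section PartSquareDecomposition

variable {K : Type*} [Field K] {v : AddValuation K (WithTop ℚ)} {h q ρ : K[X]}

lemma isPSD_map_iff (σ : K[X] ≃+* K[X]) (hdeg : ∀ p, (σ p).natDegree = p.natDegree) :
    IsPSD (σ h) (σ q) (σ ρ) ↔ IsPSD h q ρ := by
  rw [IsPSD, IsPSD, hdeg, hdeg, ← map_pow, ← map_add, σ.injective.eq_iff]

lemma isGoodPSD_map_iff (σ : K[X] ≃+* K[X]) (hdeg : ∀ p, (σ p).natDegree = p.natDegree)
    (hval : ∀ p, gaussVal v (σ p) = gaussVal v p) :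
    IsGoodPSD v (σ h) (σ q) (σ ρ) ↔ IsGoodPSD v h q ρ := by
  rw [IsGoodPSD, IsGoodPSD, σ.surjective.forall₂]
  simp only [isPSD_map_iff σ hdeg, hval]

lemma isGoodPSD_comp_C_mul_X_add_C_iff {a b : K} (ha : v a = 0) (hb : 0 ≤ v b) :
    IsGoodPSD v (h.comp (C a * X + C b)) (q.comp (C a * X + C b)) (ρ.comp (C a * X + C b)) ↔
      IsGoodPSD v h q ρ := by
  have ha0 : a ≠ 0 := v.ne_top_iff.mp (by simp [ha])
  let _ : Invertible a := invertibleOfNonzero ha0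
  have hσ (p : K[X]) : (algEquivCMulXAddC a b).toRingEquiv p = p.comp (C a * X + C b) :=
    (algEquivCMulXAddC_apply a b p).trans (comp_eq_aeval ..).symm
  simp only [← hσ]
  refine isGoodPSD_map_iff _ (fun p => ?_) (fun p => ?_)
  · rw [hσ, natDegree_comp, natDegree_linear ha0, mul_one]
  · rw [hσ, gaussVal_comp_C_mul_X_add_C p ha hb]

end PartSquareDecomposition

theorem stmt7_general {K : Type*} [Field K] (v : AddValuation K (WithTop ℚ)) (h q ρ : K[X])
    {α α' β β' : K} (hβ : β ≠ 0) (hvβ : v β = v β') (hαα' : v β ≤ v (α - α')) :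
    IsGoodPSD v (h.comp (C β * X + C α)) (q.comp (C β * X + C α))
        (ρ.comp (C β * X + C α)) ↔
      IsGoodPSD v (h.comp (C β' * X + C α')) (q.comp (C β' * X + C α'))
        (ρ.comp (C β' * X + C α')) := by
  have hvβ_top : v β ≠ ⊤ := v.ne_top_iff.mpr hβ
  have ha : v (β' / β) = 0 := by
    rw [v.map_div, ← hvβ, LinearOrderedAddCommGroupWithTop.sub_self_eq_zero_of_ne_top hvβ_top]
  have hb : 0 ≤ v ((α' - α) / β) := by
    rw [← WithTop.add_le_add_iff_right hvβ_top, zero_add, ← v.map_mul, div_mul_cancel₀ _ hβ,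
      v.map_sub_swap]
    exact hαα'
  have hcomp (p : K[X]) : p.comp (C β' * X + C α') =
      (p.comp (C β * X + C α)).comp (C (β' / β) * X + C ((α' - α) / β)) := by
    rw [comp_assoc, C_mul_X_add_C_comp_C_mul_X_add_C, mul_div_cancel₀ _ hβ, mul_div_cancel₀ _ hβ,
      sub_add_cancel]
  rw [hcomp h, hcomp q, hcomp ρ, isGoodPSD_comp_C_mul_X_add_C_iff ha hb]

/-- Whether the part-square decomposition of `h(βz + α)` induced from a
part-square decomposition `h = q² + ρ` is good depends only on the disc `D_{α, v β}`. -/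
theorem stmt7 {Kbar : Type*} [Field Kbar] [IsAlgClosed Kbar]
    (v : AddValuation Kbar (WithTop ℚ)) (hchar : (2 : Kbar) ≠ 0)
    (h q ρ : Kbar[X]) (hh : h ≠ 0) (hpsd : IsPSD h q ρ)
    (α α' β β' : Kbar) (hβ : β ≠ 0) (hβ' : β' ≠ 0)
    (hvβ : v β = v β') (hαα' : v β ≤ v (α - α')) :
    IsGoodPSD v (h.comp (C β * X + C α)) (q.comp (C β * X + C α))
        (ρ.comp (C β * X + C α)) ↔
      IsGoodPSD v (h.comp (C β' * X + C α')) (q.comp (C β' * X + C α'))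
        (ρ.comp (C β' * X + C α')) :=
  stmt7_general v h q ρ hβ hvβ hαα'
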